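/- Let 1 ≤ δ ≤ m, let x ∈ range(Aᵀ), let I be a greedy δ-subset of {1,…,m} for x with min_{i∈I} (A^{(i)}x − b_i)² > 0, and let x⁺ be the exact block Kaczmarz update of x with respect to I. Set ξ = ‖Ax − b‖₂² / min_{i∈I} (A^{(i)}x − b_i)². Then ‖x⁺ − x⋆‖₂² ≤ (1 − (δ/ξ)·λ_min⁺(AᵀA)/λ_max(A_IᵀA_I)) · ‖x − x⋆‖₂². -/

import Mathlib

open Matrix Finset

/-- The largest eigenvalue of a square real matrix (as the supremum of its
eigenvalue set). -/
noncomputable def maxEig {k : ℕ} (M : Matrix (Fin k) (Fin k) ℝ) : ℝ :=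
  sSup {μ : ℝ | Module.End.HasEigenvalue (Matrix.mulVecLin M) μ}

/-- The smallest positive eigenvalue of a square real matrix. -/
noncomputable def minPosEig {k : ℕ} (M : Matrix (Fin k) (Fin k) ℝ) : ℝ :=
  sInf {μ : ℝ | Module.End.HasEigenvalue (Matrix.mulVecLin M) μ ∧ 0 < μ}

/-- The restriction of `A` to the rows indexed by `I`. -/
def rowSub {m n : ℕ} (A : Matrix (Fin m) (Fin n) ℝ) (I : Finset (Fin m)) :
    Matrix {i : Fin m // i ∈ I} (Fin n) ℝ :=
  fun i j => A i.1 j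

/-- Squared Euclidean norm. -/
noncomputable def sqNorm {k : ℕ} (v : Fin k → ℝ) : ℝ := ∑ j, (v j) ^ 2

/-- `xp` is the exact block Kaczmarz update of `x` with respect to the row
index set `I`: it satisfies the equations indexed by `I` and minimizes the
distance to `x` among all such points (hence is the orthogonal projection of
`x` onto the affine solution set, which is the unique such minimizer). -/
def IsKaczmarzUpdate {m n : ℕ} (A : Matrix (Fin m) (Fin n) ℝ)
    (b : Fin m → ℝ) (I : Finset (Fin m)) (x xp : Fin n → ℝ) : Prop :=
  (∀ i ∈ I, A i ⬝ᵥ xp = b i) ∧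
  ∀ y : Fin n → ℝ, (∀ i ∈ I, A i ⬝ᵥ y = b i) → sqNorm (xp - x) ≤ sqNorm (y - x)

/-- `I` is a greedy `δ`-subset of `τ` for `x`: `I ⊆ τ`, `|I| = δ`, and the
residual entries on `I` dominate (in absolute value) those on `τ \ I`. -/
def IsGreedySubset {m n : ℕ} (A : Matrix (Fin m) (Fin n) ℝ) (b : Fin m → ℝ)
    (x : Fin n → ℝ) (δ : ℕ) (τ I : Finset (Fin m)) : Prop :=
  I ⊆ τ ∧ I.card = δ ∧
    ∀ i ∈ I, ∀ j ∈ τ \ I, |A j ⬝ᵥ x - b j| ≤ |A i ⬝ᵥ x - b i|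

/-!
Since `x⁺` is the orthogonal projection of `x` onto the solution set of the block system, which
contains `x⋆`, Pythagoras gives `‖x⁺ - x⋆‖² = ‖x - x⋆‖² - ‖x - x⁺‖²`. The rows in `I` map `x - x⁺`
to the block residual, so the squared length of the step is at least
`‖A_I x - b_I‖² / λ_max(A_Iᵀ A_I) ≥ |I| minᵢ (A⁽ⁱ⁾x - bᵢ)² / λ_max(A_Iᵀ A_I)`. On the other hand
`x - x⋆` lies in the row space of `A`, so `λ_min⁺(Aᵀ A) ‖x - x⋆‖² ≤ ‖A x - b‖²`, and dividing by
`‖A x - b‖²` compares the step with the error.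
-/

section SqNorm

variable {k : ℕ}

theorem sqNorm_eq_dotProduct (v : Fin k → ℝ) : sqNorm v = v ⬝ᵥ v := by
  simp only [sqNorm, dotProduct, pow_two]

theorem sqNorm_nonneg (v : Fin k → ℝ) : 0 ≤ sqNorm v :=
  sum_nonneg fun _ _ => sq_nonneg _

theorem sqNorm_add (u v : Fin k → ℝ) : sqNorm (u + v) = sqNorm u + 2 * (u ⬝ᵥ v) + sqNorm v := by
  simp only [sqNorm_eq_dotProduct, add_dotProduct, dotProduct_add, dotProduct_comm v u]
  ring

theorem sqNorm_smul (t : ℝ) (v : Fin k → ℝ) : sqNorm (t • v) = t ^ 2 * sqNorm v := by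
  simp only [sqNorm, Pi.smul_apply, smul_eq_mul, mul_pow, mul_sum]

theorem sqNorm_sub_comm (u v : Fin k → ℝ) : sqNorm (u - v) = sqNorm (v - u) := by
  simp only [sqNorm, Pi.sub_apply, sub_sq_comm]

theorem dotProduct_eq_zero_of_sqNorm_le_add_smul {p q : Fin k → ℝ}
    (h : ∀ t : ℝ, sqNorm p ≤ sqNorm (p + t • q)) : p ⬝ᵥ q = 0 := by
  have hquad (t : ℝ) : 0 ≤ sqNorm q * (t * t) + 2 * (p ⬝ᵥ q) * t + 0 := by
    have ht := h t
    rw [sqNorm_add, sqNorm_smul, dotProduct_smul, smul_eq_mul] at ht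
    linarith
  have hdiscrim : discrim (sqNorm q) (2 * (p ⬝ᵥ q)) 0 ≤ 0 := discrim_le_zero hquad
  rw [discrim, mul_zero, sub_zero] at hdiscrim
  simpa using sq_nonpos_iff _ |>.1 hdiscrim

end SqNorm

section SpectralExpansion

variable {ι : Type*} [Fintype ι] [DecidableEq ι] {M : Matrix ι ι ℝ}

theorem dotProduct_eq_sum_eigenvectorBasis (hM : M.IsHermitian) (u w : ι → ℝ) :
    u ⬝ᵥ w = ∑ i, (hM.eigenvectorBasis i ⬝ᵥ u) * (hM.eigenvectorBasis i ⬝ᵥ w) := by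
  have h := hM.eigenvectorBasis.sum_inner_mul_inner (WithLp.toLp 2 u) (WithLp.toLp 2 w)
  simp only [EuclideanSpace.inner_eq_star_dotProduct, star_trivial] at h
  simp only [dotProduct_comm u w, ← h, dotProduct_comm w]

theorem eigenvectorBasis_dotProduct_mulVec (hM : M.IsHermitian) (u : ι → ℝ) (i : ι) :
    hM.eigenvectorBasis i ⬝ᵥ M *ᵥ u = hM.eigenvalues i * (hM.eigenvectorBasis i ⬝ᵥ u) := by
  have hsymm : Mᵀ = M := by rw [← conjTranspose_eq_transpose_of_trivial, hM.eq]
  rw [dotProduct_mulVec, ← mulVec_transpose, hsymm, hM.mulVec_eigenvectorBasis, smul_dotProduct,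
    smul_eq_mul]

theorem dotProduct_mulVec_self_eq_sum_eigenvalues (hM : M.IsHermitian) (u : ι → ℝ) :
    u ⬝ᵥ M *ᵥ u = ∑ i, hM.eigenvalues i * (hM.eigenvectorBasis i ⬝ᵥ u) ^ 2 := by
  rw [dotProduct_eq_sum_eigenvectorBasis hM]
  refine sum_congr rfl fun i _ => ?_
  rw [eigenvectorBasis_dotProduct_mulVec]
  ring

theorem hasEigenvalue_mulVecLin_eigenvalues (hM : M.IsHermitian) (i : ι) :
    Module.End.HasEigenvalue M.mulVecLin (hM.eigenvalues i) := by
  rw [Module.End.hasEigenvalue_iff_mem_spectrum, ← toLin'_apply', spectrum_toLin']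
  exact hM.eigenvalues_mem_spectrum_real i

end SpectralExpansion

section RayleighBounds

variable {k : ℕ} {M : Matrix (Fin k) (Fin k) ℝ}

theorem sqNorm_eq_sum_sq_eigenvectorBasis (hM : M.IsHermitian) (u : Fin k → ℝ) :
    sqNorm u = ∑ i, (hM.eigenvectorBasis i ⬝ᵥ u) ^ 2 := by
  simp only [sqNorm_eq_dotProduct, dotProduct_eq_sum_eigenvectorBasis hM u u, pow_two]

theorem eigenvalues_le_maxEig (hM : M.IsHermitian) (i : Fin k) : hM.eigenvalues i ≤ maxEig M :=
  le_csSup (Module.End.finite_hasEigenvalue _).bddAbove (hasEigenvalue_mulVecLin_eigenvalues hM i)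

theorem minPosEig_le_eigenvalues (hM : M.IsHermitian) {i : Fin k} (hi : 0 < hM.eigenvalues i) :
    minPosEig M ≤ hM.eigenvalues i :=
  csInf_le ⟨0, fun _ hμ => hμ.2.le⟩ ⟨hasEigenvalue_mulVecLin_eigenvalues hM i, hi⟩

theorem dotProduct_mulVec_self_le_maxEig_mul (hM : M.IsHermitian) (u : Fin k → ℝ) :
    u ⬝ᵥ M *ᵥ u ≤ maxEig M * sqNorm u := by
  rw [dotProduct_mulVec_self_eq_sum_eigenvalues hM, sqNorm_eq_sum_sq_eigenvectorBasis hM, mul_sum]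
  gcongr with i
  exact eigenvalues_le_maxEig hM i

theorem minPosEig_mul_sqNorm_le (hM : M.PosSemidef) {u : Fin k → ℝ}
    (hu : ∀ v, M *ᵥ v = 0 → v ⬝ᵥ u = 0) :
    minPosEig M * sqNorm u ≤ u ⬝ᵥ M *ᵥ u := by
  rw [dotProduct_mulVec_self_eq_sum_eigenvalues hM.1, sqNorm_eq_sum_sq_eigenvectorBasis hM.1,
    mul_sum]
  refine sum_le_sum fun i _ => ?_
  rcases (hM.eigenvalues_nonneg i).eq_or_lt with hzero | hpos
  · have hker : M *ᵥ hM.1.eigenvectorBasis i = 0 := by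
      rw [hM.1.mulVec_eigenvectorBasis, ← hzero, zero_smul]
    simp [hu _ hker]
  · gcongr
    exact minPosEig_le_eigenvalues hM.1 hpos

end RayleighBounds

section GramMatrix

variable {ι κ : Type*} [Fintype ι]

theorem posSemidef_transpose_mul_self [Finite κ] (A : Matrix ι κ ℝ) :
    (Aᵀ * A).PosSemidef := by
  simpa only [conjTranspose_eq_transpose_of_trivial] using posSemidef_conjTranspose_mul_self A

theorem dotProduct_transpose_mul_self_mulVec {R : Type*} [CommSemiring R] [Fintype κ]
    (A : Matrix ι κ R) (u : κ → R) :
    u ⬝ᵥ (Aᵀ * A) *ᵥ u = A *ᵥ u ⬝ᵥ A *ᵥ u := by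
  rw [← mulVec_mulVec, dotProduct_mulVec, vecMul_transpose]

theorem minPosEig_mul_sqNorm_le_sqNorm_mulVec {m n : ℕ} (A : Matrix (Fin m) (Fin n) ℝ)
    {u : Fin n → ℝ} (hu : u ∈ Set.range Aᵀ.mulVec) :
    minPosEig (Aᵀ * A) * sqNorm u ≤ sqNorm (A *ᵥ u) := by
  rw [sqNorm_eq_dotProduct (A *ᵥ u), ← dotProduct_transpose_mul_self_mulVec]
  refine minPosEig_mul_sqNorm_le (posSemidef_transpose_mul_self A) fun v hv => ?_
  obtain ⟨w, rfl⟩ := hu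
  have hAv : A *ᵥ v = 0 := by
    rwa [← conjTranspose_eq_transpose_of_trivial, conjTranspose_mul_self_mulVec_eq_zero] at hv
  rw [dotProduct_mulVec, vecMul_transpose, hAv, zero_dotProduct]

end GramMatrix

theorem card_mul_sInf_image_le_sum {ι : Type*} (s : Finset ι) (f : ι → ℝ) :
    #s * sInf (f '' s) ≤ ∑ i ∈ s, f i := by
  rw [← nsmul_eq_mul]
  exact card_nsmul_le_sum _ _ _ fun i hi =>
    csInf_le (s.finite_toSet.image f).bddBelow (Set.mem_image_of_mem f hi)

section Kaczmarz

variable {m n : ℕ} {A : Matrix (Fin m) (Fin n) ℝ} {b : Fin m → ℝ} {I : Finset (Fin m)}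
  {x xp y : Fin n → ℝ}

theorem sum_sq_dotProduct_le_maxEig_mul (A : Matrix (Fin m) (Fin n) ℝ) (I : Finset (Fin m))
    (u : Fin n → ℝ) :
    ∑ i ∈ I, (A i ⬝ᵥ u) ^ 2 ≤ maxEig ((rowSub A I)ᵀ * rowSub A I) * sqNorm u :=
  calc ∑ i ∈ I, (A i ⬝ᵥ u) ^ 2
      = rowSub A I *ᵥ u ⬝ᵥ rowSub A I *ᵥ u := by
        simp only [← sum_coe_sort I, pow_two]
        rfl
    _ = u ⬝ᵥ ((rowSub A I)ᵀ * rowSub A I) *ᵥ u := (dotProduct_transpose_mul_self_mulVec _ _).symm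
    _ ≤ maxEig ((rowSub A I)ᵀ * rowSub A I) * sqNorm u :=
        dotProduct_mulVec_self_le_maxEig_mul (posSemidef_transpose_mul_self _).1 u

theorem sum_sq_residual_le_maxEig_mul (x : Fin n → ℝ) (hy : ∀ i ∈ I, A i ⬝ᵥ y = b i) :
    ∑ i ∈ I, (A i ⬝ᵥ x - b i) ^ 2 ≤
      maxEig ((rowSub A I)ᵀ * rowSub A I) * sqNorm (x - y) := by
  refine (sum_congr rfl fun i hi => ?_).trans_le (sum_sq_dotProduct_le_maxEig_mul A I (x - y))
  rw [dotProduct_sub, hy i hi]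

theorem IsKaczmarzUpdate.dotProduct_sub_eq_zero (h : IsKaczmarzUpdate A b I x xp)
    (hy : ∀ i ∈ I, A i ⬝ᵥ y = b i) : (xp - x) ⬝ᵥ (y - xp) = 0 := by
  refine dotProduct_eq_zero_of_sqNorm_le_add_smul fun t => ?_
  have hline : ∀ i ∈ I, A i ⬝ᵥ (xp + t • (y - xp)) = b i := fun i hi => by
    rw [dotProduct_add, dotProduct_smul, dotProduct_sub, h.1 i hi, hy i hi, sub_self, smul_zero,
      add_zero]
  rw [sub_add_eq_add_sub]
  exact h.2 _ hline

theorem IsKaczmarzUpdate.sqNorm_sub_add_sqNorm_sub (h : IsKaczmarzUpdate A b I x xp)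
    (hy : ∀ i ∈ I, A i ⬝ᵥ y = b i) : sqNorm (x - xp) + sqNorm (xp - y) = sqNorm (x - y) := by
  rw [sqNorm_sub_comm x xp, sqNorm_sub_comm xp y, sqNorm_sub_comm x y, ← sub_add_sub_cancel' xp x y,
    sqNorm_add, h.dotProduct_sub_eq_zero hy, mul_zero, add_zero]

end Kaczmarz

theorem greedy_block_kaczmarz_one_step_general {m n : ℕ} (A : Matrix (Fin m) (Fin n) ℝ)
    (b : Fin m → ℝ) (xstar : Fin n → ℝ) (hconsistent : A.mulVec xstar = b) (x : Fin n → ℝ)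
    (hrow : x - xstar ∈ Set.range Aᵀ.mulVec) (I : Finset (Fin m))
    (hminpos : 0 < sInf ((fun i => (A i ⬝ᵥ x - b i) ^ 2) '' ↑I))
    (xp : Fin n → ℝ) (hxp : IsKaczmarzUpdate A b I x xp) (ξ : ℝ)
    (hξ : ξ = sqNorm (A.mulVec x - b) / sInf ((fun i => (A i ⬝ᵥ x - b i) ^ 2) '' ↑I)) :
    sqNorm (xp - xstar) ≤
      (1 - ((#I : ℝ) / ξ) *
          (minPosEig (Aᵀ * A) / maxEig ((rowSub A I)ᵀ * rowSub A I))) *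
        sqNorm (x - xstar) := by
  set μ := sInf ((fun i => (A i ⬝ᵥ x - b i) ^ 2) '' (I : Set (Fin m)))
  set L := maxEig ((rowSub A I)ᵀ * rowSub A I)
  have hpythagoras : sqNorm (x - xp) + sqNorm (xp - xstar) = sqNorm (x - xstar) :=
    hxp.sqNorm_sub_add_sqNorm_sub fun i _ => congrFun hconsistent i
  have hstep : #I * μ ≤ L * sqNorm (x - xp) :=
    (card_mul_sInf_image_le_sum I _).trans (sum_sq_residual_le_maxEig_mul x hxp.1)
  have herror : minPosEig (Aᵀ * A) * sqNorm (x - xstar) ≤ sqNorm (A *ᵥ x - b) := by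
    simpa only [mulVec_sub, hconsistent] using minPosEig_mul_sqNorm_le_sqNorm_mulVec A hrow
  have hI : I.Nonempty := by
    by_contra! hempty
    simp [μ, hempty] at hminpos
  have hcardμ : 0 < #I * μ := mul_pos (mod_cast hI.card_pos) hminpos
  have hL : 0 < L := pos_of_mul_pos_left (hcardμ.trans_le hstep) (sqNorm_nonneg _)
  have hgain : #I / ξ * (minPosEig (Aᵀ * A) / L) * sqNorm (x - xstar) ≤ sqNorm (x - xp) :=
    calc #I / ξ * (minPosEig (Aᵀ * A) / L) * sqNorm (x - xstar)
        = #I * μ / L * (minPosEig (Aᵀ * A) * sqNorm (x - xstar) / sqNorm (A *ᵥ x - b)) := by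
          rw [hξ, div_div_eq_mul_div]
          ring
      _ ≤ #I * μ / L := by
          refine mul_le_of_le_one_right (by positivity) ?_
          exact div_le_one_of_le₀ herror (sqNorm_nonneg _)
      _ ≤ sqNorm (x - xp) := (div_le_iff₀' hL).2 hstep
  linarith

theorem greedy_block_kaczmarz_one_step {m n : ℕ} (δ : ℕ) (hδ1 : 1 ≤ δ) (hδm : δ ≤ m)
    (A : Matrix (Fin m) (Fin n) ℝ) (hA : A ≠ 0) (b : Fin m → ℝ)
    (xstar : Fin n → ℝ) (hconsistent : A.mulVec xstar = b)
    (hxstar : xstar ∈ Set.range Aᵀ.mulVec)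
    (x : Fin n → ℝ) (hx : x ∈ Set.range Aᵀ.mulVec)
    (I : Finset (Fin m))
    (hI : IsGreedySubset A b x δ (Finset.univ : Finset (Fin m)) I)
    (hminpos : 0 < sInf ((fun i => (A i ⬝ᵥ x - b i) ^ 2) '' ↑I))
    (xp : Fin n → ℝ) (hxp : IsKaczmarzUpdate A b I x xp)
    (ξ : ℝ)
    (hξ : ξ = sqNorm (A.mulVec x - b) / sInf ((fun i => (A i ⬝ᵥ x - b i) ^ 2) '' ↑I)) :
    sqNorm (xp - xstar) ≤
      (1 - ((δ : ℝ) / ξ) *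
          (minPosEig (Aᵀ * A) / maxEig ((rowSub A I)ᵀ * rowSub A I))) *
        sqNorm (x - xstar) := by
  obtain ⟨-, rfl, -⟩ := hI
  have hrow : x - xstar ∈ Set.range Aᵀ.mulVec := Aᵀ.mulVecLin.range.sub_mem hx hxstar
  exact greedy_block_kaczmarz_one_step_general A b xstar hconsistent x hrow I hminpos xp hxp ξ hξ
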